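/- Fix ε ∈ (0,1) and a ∈ (0,1). For n such that s := an is an integer with 0 < s < n, let S = {1,…,s}, and set c_S = √(1 − ε(1−a)/2) and c_{S^c} = √(1 − εa/2). For v ∈ ℝⁿ define α(v) = c_S Σ_{i∈S} v_i and E_n(v) = (c_S⁴/ε) Σ_{i∈S} (v_i²−1)² + (c_{S^c}⁴/ε) Σ_{i∉S} (v_i²−1)² + (2/n) c_S c_{S^c} α(v)². Then the minimum of E_n over the constraint set {v ∈ ℝⁿ : c_S Σ_{i∈S} v_i + c_{S^c} Σ_{i∉S} v_i = 0} is at most 3/ε, and consequently every minimizer v in this constraint set satisfies (c_S⁴/ε) Σ_{i∈S} (v_i²−1)² + (c_{S^c}⁴/ε) Σ_{i∉S} (v_i²−1)² ≤ 3/ε. -/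

import Mathlib

noncomputable section

/-- The part `S = {i : i < s}` of the bipartition, as a finset of `Fin n`. -/
def bipS (n s : ℕ) : Finset (Fin n) := Finset.univ.filter (fun i => (i : ℕ) < s)

/-- The rescaling constant `c_S = √(1 − ε(1−a)/2)`. -/
def cS (ε a : ℝ) : ℝ := Real.sqrt (1 - ε * (1 - a) / 2)

/-- The rescaling constant `c_{S^c} = √(1 − εa/2)`. -/
def cSc (ε a : ℝ) : ℝ := Real.sqrt (1 - ε * a / 2)

/-- `α(v) = c_S Σ_{i∈S} v_i`. -/
def alphaBip (n s : ℕ) (ε a : ℝ) (v : Fin n → ℝ) : ℝ :=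
  cS ε a * ∑ i ∈ bipS n s, v i

/-- The rescaled Ginzburg–Landau energy for the complete bipartite graph:
`E_n(v) = (c_S⁴/ε) Σ_{i∈S} (v_i²−1)² + (c_{S^c}⁴/ε) Σ_{i∉S} (v_i²−1)²
  + (2/n) c_S c_{S^c} α(v)²`. -/
def EnBip (n s : ℕ) (ε a : ℝ) (v : Fin n → ℝ) : ℝ :=
  (cS ε a) ^ 4 / ε * ∑ i ∈ bipS n s, ((v i) ^ 2 - 1) ^ 2
    + (cSc ε a) ^ 4 / ε * ∑ i ∈ (bipS n s)ᶜ, ((v i) ^ 2 - 1) ^ 2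
    + (2 / (n : ℝ)) * cS ε a * cSc ε a * (alphaBip n s ε a v) ^ 2

/-- The volume constraint `c_S Σ_{i∈S} v_i + c_{S^c} Σ_{i∉S} v_i = 0`. -/
def ConstrBip (n s : ℕ) (ε a : ℝ) (v : Fin n → ℝ) : Prop :=
  cS ε a * (∑ i ∈ bipS n s, v i) + cSc ε a * (∑ i ∈ (bipS n s)ᶜ, v i) = 0

/-!
The coupling term and the constraint only see the sums of `v` over `S` and over `Sᶜ`. Splitting each
part into two equal halves, plus one leftover vertex when its size is odd, and setting `v` to `1`,
`-1` and `0` on these makes both sums vanish; only the leftover vertices, at most one per part, then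
contribute to the double-well terms, one unit each. Since the coupling term is nonnegative, the
energy of this competitor bounds the double-well part of any minimizer.
-/

/-- The double-well potential energy of `v` over the vertices in `T`, without any prefactor. -/
def doubleWell {ι : Type*} (T : Finset ι) (v : ι → ℝ) : ℝ :=
  ∑ i ∈ T, (v i ^ 2 - 1) ^ 2

/-- The energy `EnBip` for an arbitrary part `S` of an arbitrary finite vertex set: the rescaling
constants are arbitrary reals `c`, `d`, and `κ` is the prefactor of the coupling term. -/
def rescaledEnergy {ι : Type*} [Fintype ι] [DecidableEq ι] (S : Finset ι) (c d ε κ : ℝ)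
    (v : ι → ℝ) : ℝ :=
  c ^ 4 / ε * doubleWell S v + d ^ 4 / ε * doubleWell Sᶜ v + κ * (c * ∑ i ∈ S, v i) ^ 2

/-- The set of `v` satisfying the volume constraint `ConstrBip`, for an arbitrary part `S` and
arbitrary rescaling constants `c`, `d`. -/
def volumeConstraint {ι : Type*} [Fintype ι] [DecidableEq ι] (S : Finset ι) (c d : ℝ) :
    Set (ι → ℝ) :=
  {v | c * ∑ i ∈ S, v i + d * ∑ i ∈ Sᶜ, v i = 0}

section Competitor

variable {ι : Type*}

theorem doubleWell_congr {T : Finset ι} {v w : ι → ℝ} (h : ∀ i ∈ T, v i = w i) :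
    doubleWell T v = doubleWell T w :=
  Finset.sum_congr rfl fun i hi => by rw [h i hi]

theorem exists_disjoint_subsets_card_eq_half (T : Finset ι) :
    ∃ A ⊆ T, ∃ B ⊆ T, Disjoint A B ∧ A.card = T.card / 2 ∧ B.card = T.card / 2 := by
  classical
  obtain ⟨A, hAT, hA⟩ := Finset.exists_subset_card_eq (Nat.div_le_self T.card 2)
  have hcard : T.card / 2 ≤ (T \ A).card := by
    rw [Finset.card_sdiff_of_subset hAT]
    lia
  obtain ⟨B, hBT, hB⟩ := Finset.exists_subset_card_eq hcard
  exact ⟨A, hAT, B, hBT.trans Finset.sdiff_subset,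
    Finset.disjoint_sdiff.mono_right hBT, hA, hB⟩

theorem exists_sum_eq_zero_and_doubleWell_eq (T : Finset ι) :
    ∃ v : ι → ℝ, ∑ i ∈ T, v i = 0 ∧ doubleWell T v = (T.card % 2 : ℕ) := by
  classical
  obtain ⟨A, hAT, B, hBT, hAB, hA, hB⟩ := exists_disjoint_subsets_card_eq_half T
  have sum_indicator {C : Finset ι} (hC : C ⊆ T) :
      ∑ i ∈ T, (if i ∈ C then (1 : ℝ) else 0) = C.card := by
    rw [Finset.sum_boole, Finset.filter_mem_eq_inter, Finset.inter_eq_right.2 hC]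
  refine ⟨fun i => (if i ∈ A then 1 else 0) - (if i ∈ B then 1 else 0), ?_, ?_⟩
  · rw [Finset.sum_sub_distrib, sum_indicator hAT, sum_indicator hBT, hA, hB, sub_self]
  · have well_eq (i : ι) :
        (((if i ∈ A then (1 : ℝ) else 0) - (if i ∈ B then 1 else 0)) ^ 2 - 1) ^ 2
          = 1 - (if i ∈ A then 1 else 0) - (if i ∈ B then 1 else 0) := by
      have hi : i ∈ A → i ∉ B := fun hiA => Finset.disjoint_left.1 hAB hiA
      split_ifs <;> simp_all
    have card_eq : (T.card : ℝ) = (T.card / 2 : ℕ) + (T.card / 2 : ℕ) + (T.card % 2 : ℕ) := by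
      norm_cast
      lia
    simp only [doubleWell, well_eq, Finset.sum_sub_distrib, sum_indicator hAT, sum_indicator hBT,
      hA, hB, Finset.sum_const, nsmul_eq_mul, mul_one]
    linarith

theorem exists_sum_eq_zero_and_doubleWell_le_one [Fintype ι] [DecidableEq ι] (S : Finset ι) :
    ∃ v : ι → ℝ, (∑ i ∈ S, v i = 0 ∧ doubleWell S v ≤ 1) ∧
      (∑ i ∈ Sᶜ, v i = 0 ∧ doubleWell Sᶜ v ≤ 1) := by
  have balanced (T : Finset ι) : ∃ v : ι → ℝ, ∑ i ∈ T, v i = 0 ∧ doubleWell T v ≤ 1 := by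
    obtain ⟨v, hsum, hwell⟩ := exists_sum_eq_zero_and_doubleWell_eq T
    exact ⟨v, hsum, hwell.trans_le (by exact_mod_cast Nat.lt_succ_iff.1 (Nat.mod_lt _ two_pos))⟩
  obtain ⟨f, hf⟩ := balanced S
  obtain ⟨g, hg⟩ := balanced Sᶜ
  have eq_f : ∀ i ∈ S, S.piecewise f g i = f i := fun i hi => S.piecewise_eq_of_mem f g hi
  have eq_g : ∀ i ∈ Sᶜ, S.piecewise f g i = g i := fun i hi =>
    S.piecewise_eq_of_notMem f g (Finset.mem_compl.1 hi)
  refine ⟨S.piecewise f g, ?_, ?_⟩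
  · rwa [Finset.sum_congr rfl eq_f, doubleWell_congr eq_f]
  · rwa [Finset.sum_congr rfl eq_g, doubleWell_congr eq_g]

end Competitor

section Energy

variable {ι : Type*} [Fintype ι] [DecidableEq ι]

theorem exists_mem_volumeConstraint_rescaledEnergy_le (S : Finset ι) (c d κ : ℝ) {ε : ℝ}
    (hε : 0 < ε) :
    ∃ v ∈ volumeConstraint S c d, rescaledEnergy S c d ε κ v ≤ (c ^ 4 + d ^ 4) / ε := by
  obtain ⟨v, ⟨hsum, hwell⟩, hsum', hwell'⟩ := exists_sum_eq_zero_and_doubleWell_le_one S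
  refine ⟨v, by simp [volumeConstraint, hsum, hsum'], ?_⟩
  calc rescaledEnergy S c d ε κ v
      = c ^ 4 / ε * doubleWell S v + d ^ 4 / ε * doubleWell Sᶜ v := by
        simp [rescaledEnergy, hsum]
    _ ≤ c ^ 4 / ε * 1 + d ^ 4 / ε * 1 := by gcongr
    _ = (c ^ 4 + d ^ 4) / ε := by ring

theorem doubleWell_le_rescaledEnergy (S : Finset ι) (c d ε : ℝ) {κ : ℝ} (hκ : 0 ≤ κ)
    (v : ι → ℝ) :
    c ^ 4 / ε * doubleWell S v + d ^ 4 / ε * doubleWell Sᶜ v ≤ rescaledEnergy S c d ε κ v :=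
  le_add_of_nonneg_right (by positivity)

theorem bipartite_energy_bound_general (S : Finset ι) (c d : ℝ) {ε κ : ℝ} (hε : 0 < ε)
    (hκ : 0 ≤ κ) :
    (∃ v ∈ volumeConstraint S c d, rescaledEnergy S c d ε κ v ≤ (c ^ 4 + d ^ 4) / ε) ∧
    ∀ v, IsMinOn (rescaledEnergy S c d ε κ) (volumeConstraint S c d) v →
      c ^ 4 / ε * doubleWell S v + d ^ 4 / ε * doubleWell Sᶜ v ≤ (c ^ 4 + d ^ 4) / ε := by
  obtain ⟨w, hw, hbound⟩ := exists_mem_volumeConstraint_rescaledEnergy_le S c d κ hε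
  exact ⟨⟨w, hw, hbound⟩, fun v hmin =>
    (doubleWell_le_rescaledEnergy S c d ε hκ v).trans ((hmin hw).trans hbound)⟩

end Energy

theorem cS_pow_four_le_one {ε a : ℝ} (hε : 0 ≤ ε) (ha : a ≤ 1) : cS ε a ^ 4 ≤ 1 :=
  pow_le_one₀ (Real.sqrt_nonneg _) <|
    Real.sqrt_le_one.2 (by linarith [mul_nonneg hε (sub_nonneg.2 ha)])

theorem cSc_pow_four_le_one {ε a : ℝ} (hε : 0 ≤ ε) (ha : 0 ≤ a) : cSc ε a ^ 4 ≤ 1 :=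
  pow_le_one₀ (Real.sqrt_nonneg _) <| Real.sqrt_le_one.2 (by linarith [mul_nonneg hε ha])

theorem cS_pow_four_add_cSc_pow_four_div_le {ε a : ℝ} (hε : 0 < ε) (ha : a ∈ Set.Icc (0 : ℝ) 1) :
    (cS ε a ^ 4 + cSc ε a ^ 4) / ε ≤ 3 / ε := by
  gcongr
  linarith [cS_pow_four_le_one hε.le ha.2, cSc_pow_four_le_one hε.le ha.1]

/-- Uniform energy bound for the rescaled bipartite Ginzburg–Landau energy: the constrained
minimum of `E_n` is at most `3/ε`, and consequently the double-well part of the energy of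
every constrained minimizer is at most `3/ε`. -/
theorem bipartite_energy_bound (ε a : ℝ)
    (hε : ε ∈ Set.Ioo (0 : ℝ) 1) (ha : a ∈ Set.Ioo (0 : ℝ) 1)
    (n s : ℕ) (hs : (s : ℝ) = a * n) (h0 : 0 < s) (hsn : s < n) :
    (∃ v : Fin n → ℝ, ConstrBip n s ε a v ∧ EnBip n s ε a v ≤ 3 / ε) ∧
    (∀ v : Fin n → ℝ, ConstrBip n s ε a v →
      (∀ w : Fin n → ℝ, ConstrBip n s ε a w → EnBip n s ε a v ≤ EnBip n s ε a w) →
      (cS ε a) ^ 4 / ε * (∑ i ∈ bipS n s, ((v i) ^ 2 - 1) ^ 2)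
        + (cSc ε a) ^ 4 / ε * (∑ i ∈ (bipS n s)ᶜ, ((v i) ^ 2 - 1) ^ 2) ≤ 3 / ε) := by
  obtain ⟨⟨v, hv, hbound⟩, hmin⟩ := bipartite_energy_bound_general (bipS n s) (cS ε a) (cSc ε a)
    (κ := 2 / n * cS ε a * cSc ε a) hε.1 (by unfold cS cSc; positivity)
  have hweights := cS_pow_four_add_cSc_pow_four_div_le hε.1 (Set.Ioo_subset_Icc_self ha)
  exact ⟨⟨v, hv, hbound.trans hweights⟩, fun v _ hvmin => (hmin v hvmin).trans hweights⟩
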